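/- arXiv:1005.5638 — 2 statements merged into one kernel-verified Lean document; each statement's English description precedes it below -/
import Mathlib

section
/- Fix ω ∈ ℝ and γ₁, γ₂ > 0. There exists a constant C > 0, depending only on ω, γ₁ and γ₂ (and in particular independent of T), such that for every T > 0 and every classical solution (v¹, v², ξ₁, ξ₂, ξ₃) of the forward coupled observer system on [0,T] with v¹, v² of class C³, one has: (1/2)·( ∫₀¹ |∂ₜv²(T,x)|² dx + ∫₀¹ |∂ₓv²(T,x)|² dx + γ₁ω⁴·ξ₁(T)² ) + (1/4)·γ₁·|∂ₓv¹(T,0)|² + (1/2)·γ₁γ₂ω²·∫₀ᵀ ξ₂(s)² ds + γ₁ω²·ξ₂(T)² ≤ C·( ∫₀¹ (|v¹(0,x)|² + |∂ₓv¹(0,x)|² + |∂ₓₓv¹(0,x)|²) dx + ∫₀¹ (|v²(0,x)|² + |∂ₓv²(0,x)|²) dx + ξ₁(0)² + ξ₂(0)² ). (This is the second energy estimate of Proposition 3, with the H²(0,1) norm of v¹(0,·) and the H¹(0,1) norm of v²(0,·) on the right-hand side.) -/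
/-!
Both `v¹` and `v² = ∂ₜv¹` solve the wave equation, so the two natural energies are

* `E₁ = ½ ∫ (|v²|² + |∂ₓv¹|²) + ½ γ₁ (ξ₂² + ω² ξ₁²)`, with `E₁' = -γ₁ γ₂ ω² ξ₁²`;
* `E₂ = ½ ∫ (|∂ₜv²|² + |∂ₓv²|²) + ½ γ₁ (ξ₂'² + ω² ξ₂²)`, with `E₂' = γ₁ γ₂ ω² ξ₁ ξ₂'`.

The derivative of `E₂` has no sign, but `ξ₁ ξ₂' = (ξ₁ ξ₂)' - ξ₂² + γ₂ ξ₁ ξ₂`. Hence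
`E₂ - γ₁ γ₂ ω² ξ₁ ξ₂ + K E₁` decreases at rate at least `½ γ₁ γ₂ ω² ξ₂²` once `2 K ≥ γ₂²`, since
then `K ξ₁² + ½ ξ₂²` absorbs the product `γ₂ ξ₁ ξ₂`. A larger `K`, still independent of `T`, makes
this functional control the energy at time `T` as well.
-/

open Set Filter MeasureTheory intervalIntegral

/-- A classical solution of the forward coupled observer system on `[0,T]`:
`∂ₜv¹ = v²`, `∂ₜv² = ∂ₓₓv¹` on `[0,T] × [0,1]`, boundary conditions `v¹(t,1) = 0`,
`v¹(t,0) = γ₁ξ₁(t) + γ₁γ₂ξ₃(t)`, and the observer ODEs `ξ₁' = ξ₂ − γ₂ξ₁`,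
`ξ₂' = −ω²ξ₁ + ∂ₓv¹(·,0)`, `ξ₃' = ξ₁` on `[0,T]`. -/
structure FwdObserverSol (T ω γ₁ γ₂ : ℝ) where
  v1 : ℝ → ℝ → ℝ
  v2 : ℝ → ℝ → ℝ
  ξ1 : ℝ → ℝ
  ξ2 : ℝ → ℝ
  ξ3 : ℝ → ℝ
  smooth_v1 : ContDiff ℝ 2 (Function.uncurry v1)
  smooth_v2 : ContDiff ℝ 2 (Function.uncurry v2)
  smooth_ξ1 : ContDiff ℝ 1 ξ1
  smooth_ξ2 : ContDiff ℝ 1 ξ2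
  smooth_ξ3 : ContDiff ℝ 1 ξ3
  pde1 : ∀ t ∈ Icc (0:ℝ) T, ∀ x ∈ Icc (0:ℝ) 1, deriv (fun s => v1 s x) t = v2 t x
  pde2 : ∀ t ∈ Icc (0:ℝ) T, ∀ x ∈ Icc (0:ℝ) 1,
    deriv (fun s => v2 s x) t = deriv (deriv (fun y => v1 t y)) x
  bc1 : ∀ t ∈ Icc (0:ℝ) T, v1 t 1 = 0
  bc0 : ∀ t ∈ Icc (0:ℝ) T, v1 t 0 = γ₁ * ξ1 t + γ₁ * γ₂ * ξ3 t
  ode1 : ∀ t ∈ Icc (0:ℝ) T, deriv ξ1 t = ξ2 t - γ₂ * ξ1 t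
  ode2 : ∀ t ∈ Icc (0:ℝ) T, deriv ξ2 t = -ω ^ 2 * ξ1 t + deriv (fun y => v1 t y) 0
  ode3 : ∀ t ∈ Icc (0:ℝ) T, deriv ξ3 t = ξ1 t

open Function
open scoped Topology

section PartialDerivatives

variable {E : Type*} [NormedAddCommGroup E] [NormedSpace ℝ E] {f : ℝ → ℝ → E} {m n : WithTop ℕ∞}
  {t x : ℝ}

/-- The partial derivative `∂ₜf` of a function `f t x` of time and space, as a function of the same
kind, so that it can be iterated. -/
noncomputable def partialT (f : ℝ → ℝ → E) (t x : ℝ) : E := deriv (fun s => f s x) t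

/-- The partial derivative `∂ₓf` of a function `f t x` of time and space, as a function of the same
kind, so that it can be iterated. -/
noncomputable def partialX (f : ℝ → ℝ → E) (t x : ℝ) : E := deriv (fun y => f t y) x

theorem hasDerivAt_fderiv_uncurry_fst (hf : DifferentiableAt ℝ (uncurry f) (t, x)) :
    HasDerivAt (fun s => f s x) (fderiv ℝ (uncurry f) (t, x) (1, 0)) t :=
  hf.hasFDerivAt.comp_hasDerivAt (f := fun s : ℝ => (s, x)) t
    ((hasDerivAt_id t).prodMk (hasDerivAt_const t x))

theorem hasDerivAt_fderiv_uncurry_snd (hf : DifferentiableAt ℝ (uncurry f) (t, x)) :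
    HasDerivAt (fun y => f t y) (fderiv ℝ (uncurry f) (t, x) (0, 1)) x :=
  hf.hasFDerivAt.comp_hasDerivAt (f := fun y : ℝ => (t, y)) x
    ((hasDerivAt_const x t).prodMk (hasDerivAt_id x))

theorem partialT_eq_fderiv (hf : DifferentiableAt ℝ (uncurry f) (t, x)) :
    partialT f t x = fderiv ℝ (uncurry f) (t, x) (1, 0) :=
  (hasDerivAt_fderiv_uncurry_fst hf).deriv

theorem partialX_eq_fderiv (hf : DifferentiableAt ℝ (uncurry f) (t, x)) :
    partialX f t x = fderiv ℝ (uncurry f) (t, x) (0, 1) :=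
  (hasDerivAt_fderiv_uncurry_snd hf).deriv

theorem hasDerivAt_partialT (hf : DifferentiableAt ℝ (uncurry f) (t, x)) :
    HasDerivAt (fun s => f s x) (partialT f t x) t :=
  (hasDerivAt_fderiv_uncurry_fst hf).differentiableAt.hasDerivAt

theorem hasDerivAt_partialX (hf : DifferentiableAt ℝ (uncurry f) (t, x)) :
    HasDerivAt (fun y => f t y) (partialX f t x) x :=
  (hasDerivAt_fderiv_uncurry_snd hf).differentiableAt.hasDerivAt

theorem hasFDerivAt_uncurry (hf : DifferentiableAt ℝ (uncurry f) (t, x)) :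
    HasFDerivAt (uncurry f)
      ((ContinuousLinearMap.fst ℝ ℝ ℝ).smulRight (partialT f t x)
        + (ContinuousLinearMap.snd ℝ ℝ ℝ).smulRight (partialX f t x)) (t, x) := by
  refine hf.hasFDerivAt.congr_fderiv ?_
  ext <;> simp [partialT_eq_fderiv hf, partialX_eq_fderiv hf]

theorem contDiff_partialT (hf : ContDiff ℝ n (uncurry f)) (hmn : m + 1 ≤ n) :
    ContDiff ℝ m (uncurry (partialT f)) := by
  have hd : Differentiable ℝ (uncurry f) :=
    (hf.of_le (le_add_self.trans hmn)).differentiable one_ne_zero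
  have h : uncurry (partialT f) = fun p => fderiv ℝ (uncurry f) p (1, 0) :=
    funext fun p => partialT_eq_fderiv (hd p)
  rw [h]
  exact (hf.fderiv_right hmn).clm_apply contDiff_const

theorem contDiff_partialX (hf : ContDiff ℝ n (uncurry f)) (hmn : m + 1 ≤ n) :
    ContDiff ℝ m (uncurry (partialX f)) := by
  have hd : Differentiable ℝ (uncurry f) :=
    (hf.of_le (le_add_self.trans hmn)).differentiable one_ne_zero
  have h : uncurry (partialX f) = fun p => fderiv ℝ (uncurry f) p (0, 1) :=
    funext fun p => partialX_eq_fderiv (hd p)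
  rw [h]
  exact (hf.fderiv_right hmn).clm_apply contDiff_const

theorem continuous_partialT (hf : ContDiff ℝ 1 (uncurry f)) : Continuous (uncurry (partialT f)) :=
  (contDiff_partialT hf (zero_add 1).le).continuous

theorem continuous_partialX (hf : ContDiff ℝ 1 (uncurry f)) : Continuous (uncurry (partialX f)) :=
  (contDiff_partialX hf (zero_add 1).le).continuous

theorem contDiff_slice (hf : ContDiff ℝ n (uncurry f)) (t : ℝ) : ContDiff ℝ n (f t) :=
  hf.comp (contDiff_const.prodMk contDiff_id)

theorem partialX_eq_partialT_of_eventually {a b : ℝ → ℝ → E}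
    (hf : ∀ᶠ p in 𝓝 (t, x), DifferentiableAt ℝ (uncurry f) p)
    (hT : ∀ᶠ p in 𝓝 (t, x), uncurry (partialT f) p = uncurry a p)
    (hX : ∀ᶠ p in 𝓝 (t, x), uncurry (partialX f) p = uncurry b p)
    (ha : DifferentiableAt ℝ (uncurry a) (t, x)) (hb : DifferentiableAt ℝ (uncurry b) (t, x)) :
    partialX a t x = partialT b t x := by
  have hf' : ∀ᶠ p in 𝓝 (t, x), HasFDerivAt (uncurry f)
      ((ContinuousLinearMap.fst ℝ ℝ ℝ).smulRight (uncurry a p)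
        + (ContinuousLinearMap.snd ℝ ℝ ℝ).smulRight (uncurry b p)) p := by
    filter_upwards [hf, hT, hX] with p hp hpT hpX
    rw [← hpT, ← hpX]
    exact hasFDerivAt_uncurry hp
  have hf'' := ((ContinuousLinearMap.smulRightL ℝ (ℝ × ℝ) E
    (ContinuousLinearMap.fst ℝ ℝ ℝ)).hasFDerivAt.comp _ ha.hasFDerivAt).add
    ((ContinuousLinearMap.smulRightL ℝ (ℝ × ℝ) E
      (ContinuousLinearMap.snd ℝ ℝ ℝ)).hasFDerivAt.comp _ hb.hasFDerivAt)
  rw [partialX_eq_fderiv ha, partialT_eq_fderiv hb]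
  simpa using second_derivative_symmetric_of_eventually hf' hf'' (0, 1) (1, 0)

theorem partialX_partialT (hf : ContDiff ℝ 2 (uncurry f)) (t x : ℝ) :
    partialX (partialT f) t x = partialT (partialX f) t x :=
  partialX_eq_partialT_of_eventually
    (Eventually.of_forall (hf.differentiable two_ne_zero))
    (Eventually.of_forall fun _ => rfl) (Eventually.of_forall fun _ => rfl)
    ((contDiff_partialT hf one_add_one_eq_two.le).differentiable one_ne_zero _)
    ((contDiff_partialX hf one_add_one_eq_two.le).differentiable one_ne_zero _)

theorem hasDerivAt_intervalIntegral_partialT (hf : ContDiff ℝ 1 (uncurry f)) (a b t : ℝ) :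
    HasDerivAt (fun s => ∫ x in a..b, f s x) (∫ x in a..b, partialT f t x) t := by
  have hf' := continuous_partialT hf
  have hslice (s : ℝ) : Continuous (f s) := hf.continuous.comp (Continuous.prodMk_right s)
  obtain ⟨M, hM⟩ := ((isCompact_Icc (a := t - 1) (b := t + 1)).prod
    (isCompact_uIcc (a := a) (b := b))).exists_bound_of_continuousOn hf'.continuousOn
  refine (hasDerivAt_integral_of_dominated_loc_of_deriv_le (bound := fun _ => M)
    (Icc_mem_nhds (by linarith) (by linarith))
    (Eventually.of_forall fun s => (hslice s).aestronglyMeasurable)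
    ((hslice t).intervalIntegrable _ _)
    (hf'.comp (Continuous.prodMk_right t)).aestronglyMeasurable
    (Eventually.of_forall fun x hx s hs => hM (s, x) ⟨hs, uIoc_subset_uIcc hx⟩)
    intervalIntegrable_const
    (Eventually.of_forall fun x _ s _ => ?_)).2
  exact hasDerivAt_partialT (hf.differentiable one_ne_zero _)

end PartialDerivatives

section WaveEnergy

variable {f : ℝ → ℝ → ℝ} {a b t : ℝ}

/-- The energy `½ ∫ₐᵇ (|∂ₜf|² + |∂ₓf|²) dx` at time `t` of a solution `f` of the wave equation. -/
noncomputable def waveEnergy (a b : ℝ) (f : ℝ → ℝ → ℝ) (t : ℝ) : ℝ :=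
  1 / 2 * ∫ x in a..b, (partialT f t x ^ 2 + partialX f t x ^ 2)

theorem waveEnergy_nonneg (hab : a ≤ b) (f : ℝ → ℝ → ℝ) (t : ℝ) : 0 ≤ waveEnergy a b f t :=
  mul_nonneg (by norm_num) (integral_nonneg hab fun _ _ => by positivity)

theorem waveEnergy_eq_add (hf : ContDiff ℝ 1 (uncurry f)) (a b t : ℝ) :
    waveEnergy a b f t
      = 1 / 2 * ((∫ x in a..b, partialT f t x ^ 2) + ∫ x in a..b, partialX f t x ^ 2) := by
  have hslice {g : ℝ → ℝ → ℝ} (hg : Continuous (uncurry g)) :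
      IntervalIntegrable (fun x => g t x ^ 2) volume a b :=
    ((hg.comp (Continuous.prodMk_right t)).pow 2).intervalIntegrable _ _
  rw [waveEnergy, integral_add (hslice (continuous_partialT hf)) (hslice (continuous_partialX hf))]

theorem hasDerivAt_waveEnergy (hf : ContDiff ℝ 2 (uncurry f)) (a b t : ℝ) :
    HasDerivAt (waveEnergy a b f)
      (∫ x in a..b, (partialT f t x * partialT (partialT f) t x
        + partialX f t x * partialT (partialX f) t x)) t := by
  have hT := contDiff_partialT hf one_add_one_eq_two.le
  have hX := contDiff_partialX hf one_add_one_eq_two.le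
  have hdensity : ContDiff ℝ 1 (uncurry fun s x => partialT f s x ^ 2 + partialX f s x ^ 2) :=
    (hT.pow 2).add (hX.pow 2)
  refine ((hasDerivAt_intervalIntegral_partialT hdensity a b t).const_mul (1 / 2)).congr_deriv ?_
  rw [← intervalIntegral.integral_const_mul]
  refine integral_congr fun x _ => ?_
  have hderiv := ((hasDerivAt_partialT (hT.differentiable one_ne_zero (t, x))).fun_pow 2).add
    ((hasDerivAt_partialT (hX.differentiable one_ne_zero (t, x))).fun_pow 2)
  refine (congrArg (1 / 2 * ·) hderiv.deriv).trans ?_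
  ring

theorem continuous_waveEnergy (hf : ContDiff ℝ 2 (uncurry f)) (a b : ℝ) :
    Continuous (waveEnergy a b f) :=
  continuous_iff_continuousAt.2 fun t => (hasDerivAt_waveEnergy hf a b t).continuousAt

theorem hasDerivAt_waveEnergy_of_wave (hf : ContDiff ℝ 2 (uncurry f))
    (hwave : ∀ x ∈ uIoo a b, partialT (partialT f) t x = partialX (partialX f) t x) :
    HasDerivAt (waveEnergy a b f)
      (partialT f t b * partialX f t b - partialT f t a * partialX f t a) t := by
  have hT := contDiff_partialT hf one_add_one_eq_two.le
  have hX := contDiff_partialX hf one_add_one_eq_two.le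
  have hslice {g : ℝ → ℝ → ℝ} (hg : ContDiff ℝ 1 (uncurry g)) :
      IntervalIntegrable (partialX g t) volume a b :=
    ((continuous_partialX hg).comp (Continuous.prodMk_right t)).intervalIntegrable _ _
  refine (hasDerivAt_waveEnergy hf a b t).congr_deriv ?_
  rw [← integral_deriv_mul_eq_sub
    (fun x _ => hasDerivAt_partialX (hT.differentiable one_ne_zero (t, x)))
    (fun x _ => hasDerivAt_partialX (hX.differentiable one_ne_zero (t, x))) (hslice hT) (hslice hX)]
  refine integral_congr_uIoo fun x hx => ?_
  simp only [hwave x hx, partialX_partialT hf]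
  ring

end WaveEnergy

section SobolevNorms

variable {q : ℝ → ℝ}

/-- The squared `H¹(0,1)` norm of a `C¹` function. -/
noncomputable def h1NormSq (q : ℝ → ℝ) : ℝ := ∫ x in (0 : ℝ)..1, (q x ^ 2 + deriv q x ^ 2)

/-- The squared `H²(0,1)` norm of a `C²` function. -/
noncomputable def h2NormSq (q : ℝ → ℝ) : ℝ :=
  ∫ x in (0 : ℝ)..1, (q x ^ 2 + deriv q x ^ 2 + deriv (deriv q) x ^ 2)

theorem h1NormSq_nonneg (q : ℝ → ℝ) : 0 ≤ h1NormSq q :=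
  integral_nonneg zero_le_one fun _ _ => by positivity

theorem h2NormSq_nonneg (q : ℝ → ℝ) : 0 ≤ h2NormSq q :=
  integral_nonneg zero_le_one fun _ _ => by positivity

theorem h1NormSq_eq_add (hq : ContDiff ℝ 1 q) :
    h1NormSq q = (∫ x in (0 : ℝ)..1, q x ^ 2) + ∫ x in (0 : ℝ)..1, deriv q x ^ 2 :=
  integral_add ((hq.continuous.pow 2).intervalIntegrable _ _)
    (((hq.continuous_deriv le_rfl).pow 2).intervalIntegrable _ _)

theorem h2NormSq_eq_add (hq : ContDiff ℝ 2 q) :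
    h2NormSq q = (∫ x in (0 : ℝ)..1, q x ^ 2) + h1NormSq (deriv q) := by
  have hq' : ContDiff ℝ 1 (deriv q) := hq.deriv'
  simp only [h2NormSq, h1NormSq, add_assoc]
  exact integral_add ((hq.continuous.pow 2).intervalIntegrable _ _)
    (((hq'.continuous.pow 2).add ((hq'.continuous_deriv le_rfl).pow 2)).intervalIntegrable _ _)

theorem h1NormSq_deriv_le_h2NormSq (hq : ContDiff ℝ 2 q) : h1NormSq (deriv q) ≤ h2NormSq q := by
  rw [h2NormSq_eq_add hq]
  exact le_add_of_nonneg_left (integral_nonneg zero_le_one fun _ _ => sq_nonneg _)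

theorem integral_sq_le_h1NormSq (hq : ContDiff ℝ 1 q) :
    ∫ x in (0 : ℝ)..1, q x ^ 2 ≤ h1NormSq q := by
  rw [h1NormSq_eq_add hq]
  exact le_add_of_nonneg_right (integral_nonneg zero_le_one fun _ _ => sq_nonneg _)

theorem integral_sq_deriv_le_h1NormSq (hq : ContDiff ℝ 1 q) :
    ∫ x in (0 : ℝ)..1, deriv q x ^ 2 ≤ h1NormSq q := by
  rw [h1NormSq_eq_add hq]
  exact le_add_of_nonneg_left (integral_nonneg zero_le_one fun _ _ => sq_nonneg _)

theorem mul_sq_left_le_integral {a b : ℝ} (hab : a ≤ b) (hq : ContDiff ℝ 1 q) :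
    (b - a) * q a ^ 2 ≤ ∫ x in a..b, (2 * q x ^ 2 + (b - a) ^ 2 * deriv q x ^ 2) := by
  -- The weight `b - y` vanishes at `b`, so that only the value at `a` survives.
  have hweighted (x : ℝ) : HasDerivAt (fun y => -((b - y) * q y ^ 2))
      (q x ^ 2 - 2 * (b - x) * q x * deriv q x) x := by
    refine (((hasDerivAt_id x).const_sub b).mul
      ((hq.differentiable one_ne_zero x).hasDerivAt.fun_pow 2)).neg.congr_deriv ?_
    simp only [id_eq]
    ring
  calc (b - a) * q a ^ 2
      = ∫ x in a..b, (q x ^ 2 - 2 * (b - x) * q x * deriv q x) := by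
        rw [integral_eq_sub_of_hasDerivAt (fun x _ => hweighted x)
          (Continuous.intervalIntegrable (by fun_prop) _ _)]
        ring
    _ ≤ ∫ x in a..b, (2 * q x ^ 2 + (b - a) ^ 2 * deriv q x ^ 2) := by
        refine integral_mono_on hab (Continuous.intervalIntegrable (by fun_prop) _ _)
          (Continuous.intervalIntegrable (by fun_prop) _ _) fun x hx => ?_
        have hweight : (b - x) ^ 2 ≤ (b - a) ^ 2 :=
          pow_le_pow_left₀ (sub_nonneg.2 hx.2) (sub_le_sub_left hx.1 b) 2
        nlinarith [sq_nonneg (q x + (b - x) * deriv q x),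
          mul_le_mul_of_nonneg_right hweight (sq_nonneg (deriv q x))]

theorem sq_zero_le_two_mul_h1NormSq (hq : ContDiff ℝ 1 q) : q 0 ^ 2 ≤ 2 * h1NormSq q := by
  calc q 0 ^ 2 ≤ ∫ x in (0 : ℝ)..1, (2 * q x ^ 2 + deriv q x ^ 2) := by
        simpa using mul_sq_left_le_integral zero_le_one hq
    _ ≤ ∫ x in (0 : ℝ)..1, 2 * (q x ^ 2 + deriv q x ^ 2) := by
        refine integral_mono_on zero_le_one (Continuous.intervalIntegrable (by fun_prop) _ _)
          (Continuous.intervalIntegrable (by fun_prop) _ _) fun x _ => ?_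
        linarith [sq_nonneg (deriv q x)]
    _ = 2 * h1NormSq q := intervalIntegral.integral_const_mul _ _

end SobolevNorms

namespace FwdObserverSol

variable {T ω γ₁ γ₂ t x : ℝ}

theorem partialT_v1 (S : FwdObserverSol T ω γ₁ γ₂) (ht : t ∈ Icc 0 T) (hx : x ∈ Icc 0 1) :
    partialT S.v1 t x = S.v2 t x :=
  S.pde1 t ht x hx

theorem partialT_v2 (S : FwdObserverSol T ω γ₁ γ₂) (ht : t ∈ Icc 0 T) (hx : x ∈ Icc 0 1) :
    partialT S.v2 t x = partialX (partialX S.v1) t x :=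
  S.pde2 t ht x hx

theorem partialT_partialT_v1 (S : FwdObserverSol T ω γ₁ γ₂) (ht : t ∈ Ioo 0 T)
    (hx : x ∈ Icc 0 1) : partialT (partialT S.v1) t x = partialX (partialX S.v1) t x := by
  have h : (fun s => partialT S.v1 s x) =ᶠ[𝓝 t] fun s => S.v2 s x := by
    filter_upwards [Icc_mem_nhds ht.1 ht.2] with s hs using S.partialT_v1 hs hx
  exact h.deriv_eq.trans (S.partialT_v2 (Ioo_subset_Icc_self ht) hx)

theorem partialT_partialX_v1 (S : FwdObserverSol T ω γ₁ γ₂) (ht : t ∈ Icc 0 T)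
    (hx : x ∈ Icc 0 1) : partialT (partialX S.v1) t x = partialX S.v2 t x := by
  have hv1t : ContDiff ℝ 1 (uncurry (partialT S.v1)) :=
    contDiff_partialT S.smooth_v1 one_add_one_eq_two.le
  have hderiv₁ := hasDerivAt_partialX (hv1t.differentiable one_ne_zero (t, x))
  have hderiv₂ := hasDerivAt_partialX (S.smooth_v2.differentiable two_ne_zero (t, x))
  rw [← partialX_partialT S.smooth_v1]
  exact (uniqueDiffOn_Icc zero_lt_one x hx).eq_deriv _ hderiv₁.hasDerivWithinAt
    (hderiv₂.hasDerivWithinAt.congr_of_mem (fun y hy => S.partialT_v1 ht hy) hx)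

-- Since `v¹` is only `C²`, the wave equation cannot simply be differentiated in time; instead, the
-- claim is that the differential `∂ₓv² dt + ∂ₜv² dx` of `∂ₓv¹` is closed.
theorem partialT_partialT_v2 (S : FwdObserverSol T ω γ₁ γ₂) (ht : t ∈ Ioo 0 T)
    (hx : x ∈ Ioo 0 1) : partialT (partialT S.v2) t x = partialX (partialX S.v2) t x := by
  have hv1x : ContDiff ℝ 1 (uncurry (partialX S.v1)) :=
    contDiff_partialX S.smooth_v1 one_add_one_eq_two.le
  have hmem : ∀ᶠ p in 𝓝 (t, x), p ∈ Icc 0 T ×ˢ Icc 0 1 :=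
    prod_mem_nhds (Icc_mem_nhds ht.1 ht.2) (Icc_mem_nhds hx.1 hx.2)
  refine (partialX_eq_partialT_of_eventually (f := partialX S.v1)
    (Eventually.of_forall (hv1x.differentiable one_ne_zero)) ?_ ?_
    ((contDiff_partialX S.smooth_v2 one_add_one_eq_two.le).differentiable one_ne_zero _)
    ((contDiff_partialT S.smooth_v2 one_add_one_eq_two.le).differentiable one_ne_zero _)).symm
  · exact hmem.mono fun p hp => S.partialT_partialX_v1 hp.1 hp.2
  · exact hmem.mono fun p hp => (S.partialT_v2 hp.1 hp.2).symm

theorem hasDerivAt_ξ1 (S : FwdObserverSol T ω γ₁ γ₂) (ht : t ∈ Icc 0 T) :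
    HasDerivAt S.ξ1 (S.ξ2 t - γ₂ * S.ξ1 t) t :=
  S.ode1 t ht ▸ (S.smooth_ξ1.differentiable one_ne_zero t).hasDerivAt

theorem hasDerivAt_ξ2 (S : FwdObserverSol T ω γ₁ γ₂) (ht : t ∈ Icc 0 T) :
    HasDerivAt S.ξ2 (-ω ^ 2 * S.ξ1 t + partialX S.v1 t 0) t :=
  S.ode2 t ht ▸ (S.smooth_ξ2.differentiable one_ne_zero t).hasDerivAt

theorem hasDerivAt_ξ3 (S : FwdObserverSol T ω γ₁ γ₂) (ht : t ∈ Icc 0 T) :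
    HasDerivAt S.ξ3 (S.ξ1 t) t :=
  S.ode3 t ht ▸ (S.smooth_ξ3.differentiable one_ne_zero t).hasDerivAt

theorem hasDerivAt_partialX_v1_zero (S : FwdObserverSol T ω γ₁ γ₂) (ht : t ∈ Icc 0 T) :
    HasDerivAt (fun s => partialX S.v1 s 0) (partialX S.v2 t 0) t := by
  rw [← S.partialT_partialX_v1 ht (left_mem_Icc.2 zero_le_one)]
  exact hasDerivAt_partialT
    ((contDiff_partialX S.smooth_v1 one_add_one_eq_two.le).differentiable one_ne_zero _)

theorem v2_zero (S : FwdObserverSol T ω γ₁ γ₂) (ht : t ∈ Ioo 0 T) :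
    S.v2 t 0 = γ₁ * S.ξ2 t := by
  have htc := Ioo_subset_Icc_self ht
  have hbc : (fun s => S.v1 s 0) =ᶠ[𝓝 t] fun s => γ₁ * S.ξ1 s + γ₁ * γ₂ * S.ξ3 s := by
    filter_upwards [Icc_mem_nhds ht.1 ht.2] with s hs using S.bc0 s hs
  rw [← S.partialT_v1 htc (left_mem_Icc.2 zero_le_one), partialT, hbc.deriv_eq,
    (((S.hasDerivAt_ξ1 htc).const_mul γ₁).fun_add
      ((S.hasDerivAt_ξ3 htc).const_mul (γ₁ * γ₂))).deriv]
  ring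

theorem partialT_v2_zero (S : FwdObserverSol T ω γ₁ γ₂) (ht : t ∈ Ioo 0 T) :
    partialT S.v2 t 0 = γ₁ * (-ω ^ 2 * S.ξ1 t + partialX S.v1 t 0) := by
  have hbc : (fun s => S.v2 s 0) =ᶠ[𝓝 t] fun s => γ₁ * S.ξ2 s := by
    filter_upwards [Ioo_mem_nhds ht.1 ht.2] with s hs using S.v2_zero hs
  rw [partialT, hbc.deriv_eq, ((S.hasDerivAt_ξ2 (Ioo_subset_Icc_self ht)).const_mul γ₁).deriv]

theorem v2_one (S : FwdObserverSol T ω γ₁ γ₂) (ht : t ∈ Ioo 0 T) : S.v2 t 1 = 0 := by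
  have hbc : (fun s => S.v1 s 1) =ᶠ[𝓝 t] fun _ => 0 := by
    filter_upwards [Icc_mem_nhds ht.1 ht.2] with s hs using S.bc1 s hs
  rw [← S.partialT_v1 (Ioo_subset_Icc_self ht) (right_mem_Icc.2 zero_le_one), partialT,
    hbc.deriv_eq, deriv_const]

theorem partialT_v2_one (S : FwdObserverSol T ω γ₁ γ₂) (ht : t ∈ Ioo 0 T) :
    partialT S.v2 t 1 = 0 := by
  have hbc : (fun s => S.v2 s 1) =ᶠ[𝓝 t] fun _ => 0 := by
    filter_upwards [Ioo_mem_nhds ht.1 ht.2] with s hs using S.v2_one hs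
  rw [partialT, hbc.deriv_eq, deriv_const]

/-- The first-order energy `E₁`: the wave energy of `v¹` and the oscillator energy of the
observer. -/
noncomputable def energy (S : FwdObserverSol T ω γ₁ γ₂) (t : ℝ) : ℝ :=
  waveEnergy 0 1 S.v1 t + γ₁ / 2 * (S.ξ2 t ^ 2 + ω ^ 2 * S.ξ1 t ^ 2)

/-- The second-order energy `E₂`: the analogue of `energy` with `v²` and `ξ₂` in place of `v¹` and
`ξ₁`, where `ξ₂'` is replaced by its value `-ω² ξ₁ + ∂ₓv¹(·,0)`. -/
noncomputable def secondEnergy (S : FwdObserverSol T ω γ₁ γ₂) (t : ℝ) : ℝ :=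
  waveEnergy 0 1 S.v2 t
    + γ₁ / 2 * ((-ω ^ 2 * S.ξ1 t + partialX S.v1 t 0) ^ 2 + ω ^ 2 * S.ξ2 t ^ 2)

/-- The Lyapunov functional `E₂ - γ₁ γ₂ ω² ξ₁ ξ₂ + K E₁`, with a free weight `K` on the first-order
energy. -/
noncomputable def lyapunov (S : FwdObserverSol T ω γ₁ γ₂) (K t : ℝ) : ℝ :=
  S.secondEnergy t - γ₁ * γ₂ * ω ^ 2 * (S.ξ1 t * S.ξ2 t) + K * S.energy t

theorem hasDerivAt_energy (S : FwdObserverSol T ω γ₁ γ₂) (ht : t ∈ Ioo 0 T) :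
    HasDerivAt S.energy (-(γ₁ * γ₂ * ω ^ 2 * S.ξ1 t ^ 2)) t := by
  have htc := Ioo_subset_Icc_self ht
  have hwave := hasDerivAt_waveEnergy_of_wave S.smooth_v1 (a := 0) (b := 1) fun x hx =>
    S.partialT_partialT_v1 ht (Ioo_subset_Icc_self (uIoo_of_le (zero_le_one' ℝ) ▸ hx))
  rw [S.partialT_v1 htc (right_mem_Icc.2 zero_le_one),
    S.partialT_v1 htc (left_mem_Icc.2 zero_le_one), S.v2_one ht, S.v2_zero ht] at hwave
  refine (hwave.add ((((S.hasDerivAt_ξ2 htc).fun_pow 2).add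
    (((S.hasDerivAt_ξ1 htc).fun_pow 2).const_mul (ω ^ 2))).const_mul (γ₁ / 2))).congr_deriv ?_
  ring

theorem hasDerivAt_secondEnergy (S : FwdObserverSol T ω γ₁ γ₂) (ht : t ∈ Ioo 0 T) :
    HasDerivAt S.secondEnergy
      (γ₁ * γ₂ * ω ^ 2 * (S.ξ1 t * (-ω ^ 2 * S.ξ1 t + partialX S.v1 t 0))) t := by
  have htc := Ioo_subset_Icc_self ht
  have hwave := hasDerivAt_waveEnergy_of_wave S.smooth_v2 (a := 0) (b := 1) fun x hx =>
    S.partialT_partialT_v2 ht (uIoo_of_le (zero_le_one' ℝ) ▸ hx)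
  rw [S.partialT_v2_one ht, S.partialT_v2_zero ht] at hwave
  have hdξ2 := ((S.hasDerivAt_ξ1 htc).const_mul (-ω ^ 2)).fun_add
    (S.hasDerivAt_partialX_v1_zero htc)
  refine (hwave.add (((hdξ2.fun_pow 2).add
    (((S.hasDerivAt_ξ2 htc).fun_pow 2).const_mul (ω ^ 2))).const_mul (γ₁ / 2))).congr_deriv ?_
  ring

theorem hasDerivAt_lyapunov (S : FwdObserverSol T ω γ₁ γ₂) (K : ℝ) (ht : t ∈ Ioo 0 T) :
    HasDerivAt (S.lyapunov K)
      (γ₁ * γ₂ * ω ^ 2 * (γ₂ * (S.ξ1 t * S.ξ2 t) - S.ξ2 t ^ 2 - K * S.ξ1 t ^ 2)) t := by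
  have htc := Ioo_subset_Icc_self ht
  have hcross := ((S.hasDerivAt_ξ1 htc).mul (S.hasDerivAt_ξ2 htc)).const_mul (γ₁ * γ₂ * ω ^ 2)
  refine (((S.hasDerivAt_secondEnergy ht).sub hcross).add
    ((S.hasDerivAt_energy ht).const_mul K)).congr_deriv ?_
  ring

theorem continuous_lyapunov (S : FwdObserverSol T ω γ₁ γ₂) (K : ℝ) :
    Continuous (S.lyapunov K) := by
  have hv1x0 : Continuous fun s => partialX S.v1 s 0 :=
    (continuous_partialX (S.smooth_v1.of_le one_le_two)).comp (Continuous.prodMk_left 0)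
  have hξ1 := S.smooth_ξ1.continuous
  have hξ2 := S.smooth_ξ2.continuous
  have hE1 := continuous_waveEnergy S.smooth_v1 0 1
  have hE2 := continuous_waveEnergy S.smooth_v2 0 1
  unfold lyapunov secondEnergy energy
  fun_prop

theorem lyapunov_add_integral_le (S : FwdObserverSol T ω γ₁ γ₂) (hγ : 0 ≤ γ₁ * γ₂) (hT : 0 ≤ T)
    {K : ℝ} (hK : γ₂ ^ 2 ≤ 2 * K) :
    S.lyapunov K T + 1 / 2 * γ₁ * γ₂ * ω ^ 2 * (∫ s in 0..T, S.ξ2 s ^ 2) ≤ S.lyapunov K 0 := by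
  have hφ : Continuous fun s => -(1 / 2 * γ₁ * γ₂ * ω ^ 2) * S.ξ2 s ^ 2 :=
    continuous_const.mul (S.smooth_ξ2.continuous.pow 2)
  have hdissipation : S.lyapunov K T - S.lyapunov K 0
      ≤ ∫ s in 0..T, -(1 / 2 * γ₁ * γ₂ * ω ^ 2) * S.ξ2 s ^ 2 := by
    refine sub_le_integral_of_hasDeriv_right_of_le hT (S.continuous_lyapunov K).continuousOn
      (fun t ht => (S.hasDerivAt_lyapunov K ht).hasDerivWithinAt)
      hφ.continuousOn.integrableOn_Icc fun t _ => ?_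
    have habsorb : 0 ≤ K * S.ξ1 t ^ 2 + 1 / 2 * S.ξ2 t ^ 2 - γ₂ * (S.ξ1 t * S.ξ2 t) := by
      nlinarith [sq_nonneg (γ₂ * S.ξ1 t - S.ξ2 t),
        mul_le_mul_of_nonneg_right hK (sq_nonneg (S.ξ1 t))]
    linarith [mul_nonneg (mul_nonneg hγ (sq_nonneg ω)) habsorb]
  rw [intervalIntegral.integral_const_mul] at hdissipation
  linarith

theorem le_lyapunov (S : FwdObserverSol T ω γ₁ γ₂) (hγ₁ : 0 ≤ γ₁) (hγ₂ : 0 ≤ γ₂) {K : ℝ}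
    (hK₁ : 2 * ω ^ 2 + γ₂ ≤ K) (hK₂ : ω ^ 2 + γ₂ * ω ^ 2 ≤ K) (t : ℝ) :
    waveEnergy 0 1 S.v2 t + γ₁ * (1 / 2 * ω ^ 4 * S.ξ1 t ^ 2 + 1 / 4 * partialX S.v1 t 0 ^ 2
      + ω ^ 2 * S.ξ2 t ^ 2) ≤ S.lyapunov K t := by
  have hK : 0 ≤ K := le_trans (by positivity) hK₁
  have hboundary (a b p : ℝ) : 1 / 2 * ω ^ 4 * a ^ 2 + 1 / 4 * p ^ 2 + ω ^ 2 * b ^ 2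
      ≤ 1 / 2 * ((-ω ^ 2 * a + p) ^ 2 + ω ^ 2 * b ^ 2) - γ₂ * ω ^ 2 * (a * b)
        + K * (1 / 2 * (b ^ 2 + ω ^ 2 * a ^ 2)) := by
    have hcross : 0 ≤ γ₂ * ω ^ 2 * (a - b) ^ 2 := by positivity
    linarith [sq_nonneg (p / 2 - ω ^ 2 * a), mul_le_mul_of_nonneg_right hK₂ (sq_nonneg b),
      mul_le_mul_of_nonneg_right hK₁ (mul_nonneg (sq_nonneg ω) (sq_nonneg a))]
  have hwave := mul_nonneg hK (waveEnergy_nonneg zero_le_one S.v1 t)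
  unfold lyapunov secondEnergy energy
  linarith [mul_le_mul_of_nonneg_left (hboundary (S.ξ1 t) (S.ξ2 t) (partialX S.v1 t 0)) hγ₁]

/-- The squared norm of the initial data, in `H² × H¹ × ℝ²`. -/
noncomputable def initialNormSq (S : FwdObserverSol T ω γ₁ γ₂) : ℝ :=
  h2NormSq (S.v1 0) + h1NormSq (S.v2 0) + S.ξ1 0 ^ 2 + S.ξ2 0 ^ 2

theorem waveEnergy_v1_zero_le (S : FwdObserverSol T ω γ₁ γ₂) (hT : 0 ≤ T) :
    waveEnergy 0 1 S.v1 0 ≤ 1 / 2 * (h2NormSq (S.v1 0) + h1NormSq (S.v2 0)) := by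
  have hv1 := contDiff_slice S.smooth_v1 0
  have hv2 := (contDiff_slice S.smooth_v2 0).of_le one_le_two
  have htime : ∫ x in (0 : ℝ)..1, partialT S.v1 0 x ^ 2 = ∫ x in (0 : ℝ)..1, S.v2 0 x ^ 2 :=
    integral_congr_Ioo_of_le zero_le_one fun x hx => congrArg (· ^ 2)
      (S.partialT_v1 (left_mem_Icc.2 hT) (Ioo_subset_Icc_self hx))
  have hspace : ∫ x in (0 : ℝ)..1, partialX S.v1 0 x ^ 2 ≤ h2NormSq (S.v1 0) :=
    (integral_sq_le_h1NormSq hv1.deriv').trans (h1NormSq_deriv_le_h2NormSq hv1)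
  rw [waveEnergy_eq_add (S.smooth_v1.of_le one_le_two), htime]
  linarith [integral_sq_le_h1NormSq hv2]

theorem waveEnergy_v2_zero_le (S : FwdObserverSol T ω γ₁ γ₂) (hT : 0 ≤ T) :
    waveEnergy 0 1 S.v2 0 ≤ 1 / 2 * (h2NormSq (S.v1 0) + h1NormSq (S.v2 0)) := by
  have hv1 := contDiff_slice S.smooth_v1 0
  have hv2 := (contDiff_slice S.smooth_v2 0).of_le one_le_two
  have htime : ∫ x in (0 : ℝ)..1, partialT S.v2 0 x ^ 2 ≤ h2NormSq (S.v1 0) :=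
    calc ∫ x in (0 : ℝ)..1, partialT S.v2 0 x ^ 2
        = ∫ x in (0 : ℝ)..1, deriv (deriv (S.v1 0)) x ^ 2 :=
          integral_congr_Ioo_of_le zero_le_one fun x hx => congrArg (· ^ 2)
            (S.partialT_v2 (left_mem_Icc.2 hT) (Ioo_subset_Icc_self hx))
      _ ≤ h1NormSq (deriv (S.v1 0)) := integral_sq_deriv_le_h1NormSq hv1.deriv'
      _ ≤ h2NormSq (S.v1 0) := h1NormSq_deriv_le_h2NormSq hv1
  have hspace : ∫ x in (0 : ℝ)..1, partialX S.v2 0 x ^ 2 ≤ h1NormSq (S.v2 0) :=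
    integral_sq_deriv_le_h1NormSq hv2
  rw [waveEnergy_eq_add (S.smooth_v2.of_le one_le_two)]
  linarith

theorem energy_zero_le (S : FwdObserverSol T ω γ₁ γ₂) (hγ₁ : 0 ≤ γ₁) (hT : 0 ≤ T) :
    S.energy 0 ≤ (1 / 2 + γ₁ / 2 * (1 + ω ^ 2)) * S.initialNormSq := by
  have hA := h2NormSq_nonneg (S.v1 0)
  have hB := h1NormSq_nonneg (S.v2 0)
  have hwave : waveEnergy 0 1 S.v1 0 ≤ 1 / 2 * S.initialNormSq := by
    unfold initialNormSq
    linarith [S.waveEnergy_v1_zero_le hT, sq_nonneg (S.ξ1 0), sq_nonneg (S.ξ2 0)]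
  have hoscillator : S.ξ2 0 ^ 2 + ω ^ 2 * S.ξ1 0 ^ 2 ≤ (1 + ω ^ 2) * S.initialNormSq := by
    rw [one_add_mul]
    unfold initialNormSq
    gcongr <;> linarith [sq_nonneg (S.ξ1 0), sq_nonneg (S.ξ2 0)]
  unfold energy
  linarith [mul_le_mul_of_nonneg_left hoscillator (half_pos one_pos).le,
    mul_le_mul_of_nonneg_left hoscillator hγ₁]

theorem secondEnergy_zero_le (S : FwdObserverSol T ω γ₁ γ₂) (hγ₁ : 0 ≤ γ₁) (hT : 0 ≤ T) :
    S.secondEnergy 0 ≤ (1 / 2 + γ₁ * (2 + ω ^ 2 / 2 + ω ^ 4)) * S.initialNormSq := by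
  have hA := h2NormSq_nonneg (S.v1 0)
  have hB := h1NormSq_nonneg (S.v2 0)
  have hwave : waveEnergy 0 1 S.v2 0 ≤ 1 / 2 * S.initialNormSq := by
    unfold initialNormSq
    linarith [S.waveEnergy_v2_zero_le hT, sq_nonneg (S.ξ1 0), sq_nonneg (S.ξ2 0)]
  have htrace : partialX S.v1 0 0 ^ 2 ≤ 2 * h2NormSq (S.v1 0) :=
    have hv1 := contDiff_slice S.smooth_v1 0
    (sq_zero_le_two_mul_h1NormSq hv1.deriv').trans
      (mul_le_mul_of_nonneg_left (h1NormSq_deriv_le_h2NormSq hv1) zero_le_two)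
  have hoscillator : (-ω ^ 2 * S.ξ1 0 + partialX S.v1 0 0) ^ 2 + ω ^ 2 * S.ξ2 0 ^ 2
      ≤ 2 * ((2 + ω ^ 2 / 2 + ω ^ 4) * S.initialNormSq) :=
    calc _ ≤ 2 * (partialX S.v1 0 0 ^ 2 + ω ^ 2 / 2 * S.ξ2 0 ^ 2 + ω ^ 4 * S.ξ1 0 ^ 2) := by
          linarith [sq_nonneg (ω ^ 2 * S.ξ1 0 + partialX S.v1 0 0)]
      _ ≤ 2 * (2 * S.initialNormSq + ω ^ 2 / 2 * S.initialNormSq + ω ^ 4 * S.initialNormSq) := by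
          unfold initialNormSq
          gcongr <;> linarith [sq_nonneg (S.ξ1 0), sq_nonneg (S.ξ2 0)]
      _ = _ := by ring
  unfold secondEnergy
  linarith [mul_le_mul_of_nonneg_left hoscillator hγ₁]

theorem lyapunov_zero_le (S : FwdObserverSol T ω γ₁ γ₂) (hγ₁ : 0 ≤ γ₁) (hγ₂ : 0 ≤ γ₂)
    (hT : 0 ≤ T) {K : ℝ} (hK : 0 ≤ K) :
    S.lyapunov K 0 ≤ (1 / 2 + γ₁ * (2 + ω ^ 2 / 2 + ω ^ 4) + γ₁ * γ₂ * ω ^ 2 / 2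
      + K * (1 / 2 + γ₁ / 2 * (1 + ω ^ 2))) * S.initialNormSq := by
  have hcross : -(S.ξ1 0 * S.ξ2 0) ≤ S.initialNormSq / 2 := by
    unfold initialNormSq
    linarith [sq_nonneg (S.ξ1 0 + S.ξ2 0), h2NormSq_nonneg (S.v1 0), h1NormSq_nonneg (S.v2 0)]
  have hcoeff : 0 ≤ γ₁ * γ₂ * ω ^ 2 := by positivity
  unfold lyapunov
  linarith [S.secondEnergy_zero_le hγ₁ hT, mul_le_mul_of_nonneg_left hcross hcoeff,
    mul_le_mul_of_nonneg_left (S.energy_zero_le hγ₁ hT) hK]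

end FwdObserverSol

theorem forward_second_energy_estimate_general
    (ω : ℝ) {γ₁ γ₂ : ℝ} (hγ₁ : 0 ≤ γ₁) (hγ₂ : 0 ≤ γ₂) :
    ∃ C > 0, ∀ T : ℝ, 0 ≤ T → ∀ S : FwdObserverSol T ω γ₁ γ₂,
      1 / 2 * ((∫ x in (0 : ℝ)..1, partialT S.v2 T x ^ 2)
          + (∫ x in (0 : ℝ)..1, partialX S.v2 T x ^ 2) + γ₁ * ω ^ 4 * S.ξ1 T ^ 2)
        + 1 / 4 * γ₁ * partialX S.v1 T 0 ^ 2
        + 1 / 2 * γ₁ * γ₂ * ω ^ 2 * (∫ s in (0 : ℝ)..T, S.ξ2 s ^ 2)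
        + γ₁ * ω ^ 2 * S.ξ2 T ^ 2
      ≤ C * (h2NormSq (S.v1 0) + h1NormSq (S.v2 0) + S.ξ1 0 ^ 2 + S.ξ2 0 ^ 2) := by
  obtain ⟨K, hK, hdissipative, hcoercive₁, hcoercive₂⟩ : ∃ K : ℝ, 0 ≤ K ∧ γ₂ ^ 2 ≤ 2 * K ∧
      2 * ω ^ 2 + γ₂ ≤ K ∧ ω ^ 2 + γ₂ * ω ^ 2 ≤ K := by
    have hγω : 0 ≤ γ₂ * ω ^ 2 := by positivity
    refine ⟨γ₂ ^ 2 + 2 * ω ^ 2 + γ₂ + γ₂ * ω ^ 2, by positivity, ?_, ?_, ?_⟩ <;>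
      linarith [sq_nonneg ω, sq_nonneg γ₂]
  refine ⟨1 / 2 + γ₁ * (2 + ω ^ 2 / 2 + ω ^ 4) + γ₁ * γ₂ * ω ^ 2 / 2
    + K * (1 / 2 + γ₁ / 2 * (1 + ω ^ 2)), by positivity, fun T hT S => ?_⟩
  have hterminal := S.le_lyapunov hγ₁ hγ₂ hcoercive₁ hcoercive₂ T
  rw [waveEnergy_eq_add (S.smooth_v2.of_le one_le_two)] at hterminal
  have hdecay := S.lyapunov_add_integral_le (mul_nonneg hγ₁ hγ₂) hT hdissipative
  have hinitial := S.lyapunov_zero_le hγ₁ hγ₂ hT hK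
  unfold FwdObserverSol.initialNormSq at hinitial
  linarith

/-- second energy estimate of Proposition 3: there is a constant
`C > 0` depending only on `ω, γ₁, γ₂` (not on `T`) bounding the second-order energy
at time `T` by the `H² × H¹` norm of the initial data plus `ξ₁(0)² + ξ₂(0)²`. -/
theorem forward_second_energy_estimate
    (ω γ₁ γ₂ : ℝ) (hγ₁ : 0 < γ₁) (hγ₂ : 0 < γ₂) :
    ∃ C > 0, ∀ T : ℝ, 0 < T → ∀ S : FwdObserverSol T ω γ₁ γ₂,
      ContDiff ℝ 3 (Function.uncurry S.v1) →
      ContDiff ℝ 3 (Function.uncurry S.v2) →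
      (1 / 2) * ((∫ x in (0:ℝ)..1, (deriv (fun s => S.v2 s x) T) ^ 2)
          + (∫ x in (0:ℝ)..1, (deriv (fun y => S.v2 T y) x) ^ 2)
          + γ₁ * ω ^ 4 * (S.ξ1 T) ^ 2)
        + (1 / 4) * γ₁ * (deriv (fun y => S.v1 T y) 0) ^ 2
        + (1 / 2) * γ₁ * γ₂ * ω ^ 2 * (∫ s in (0:ℝ)..T, (S.ξ2 s) ^ 2)
        + γ₁ * ω ^ 2 * (S.ξ2 T) ^ 2
      ≤ C * ((∫ x in (0:ℝ)..1,
            ((S.v1 0 x) ^ 2 + (deriv (fun y => S.v1 0 y) x) ^ 2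
              + (deriv (deriv (fun y => S.v1 0 y)) x) ^ 2))
          + (∫ x in (0:ℝ)..1,
            ((S.v2 0 x) ^ 2 + (deriv (fun y => S.v2 0 y) x) ^ 2))
          + (S.ξ1 0) ^ 2 + (S.ξ2 0) ^ 2) := by
  obtain ⟨C, hC, h⟩ := forward_second_energy_estimate_general ω hγ₁.le hγ₂.le
  exact ⟨C, hC, fun T hT S _ _ => h T hT.le S⟩
end

section
/- Let T > 0 and let v : [0,T] × [0,1] → ℝ be of class C², satisfying ∂ₜₜv = ∂ₓₓv on [0,T] × [0,1] and v(t,1) = 0 for all t ∈ [0,T]. Then the following multiplier identity holds: (1/2)·( ∫₀ᵀ∫₀¹ |∂ₜv(t,x)|² dx dt − ∫₀ᵀ |∂ₜv(t,0)|² dt + ∫₀ᵀ∫₀¹ |∂ₓv(t,x)|² dx dt ) + ∫₀¹ (x−1)·∂ₓv(T,x)·∂ₜv(T,x) dx − ∫₀¹ (x−1)·∂ₓv(0,x)·∂ₜv(0,x) dx − (1/2)·∫₀ᵀ |∂ₓv(t,0)|² dt = 0. (This is the multiplier identity, obtained by multiplying the wave equation by (x−1)∂ₓv and integrating by parts, underlying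 the hidden regularity estimate of Lemma 2.) -/
open Set Filter MeasureTheory intervalIntegral

/-!
The momentum density `⟪∂ₜv, ∂ₓv⟫` and the energy density `(‖∂ₜv‖² + ‖∂ₓv‖²) / 2` of a solution of
the wave equation satisfy the conservation law `∂ₜ(momentum) = ∂ₓ(energy)`. Multiplying this law by
a weight `w x` and applying the divergence theorem leaves the integral of `w' · energy` against
boundary terms. The weight `x - d` has derivative `1` and vanishes on the side `x = d`.
-/

open Function
open scoped Interval RealInnerProductSpace

section PartialDerivatives

section

variable {𝕜 F : Type*} [NontriviallyNormedField 𝕜] [NormedAddCommGroup F] [NormedSpace 𝕜 F]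
  {u : 𝕜 → 𝕜 → F} {t x : 𝕜}

theorem hasDerivAt_left_of_differentiableAt_uncurry
    (hu : DifferentiableAt 𝕜 (uncurry u) (t, x)) :
    HasDerivAt (u · x) (fderiv 𝕜 (uncurry u) (t, x) (1, 0)) t :=
  hu.hasFDerivAt.comp_hasDerivAt (f := (·, x)) t
    ((hasDerivAt_id t).prodMk (hasDerivAt_const t x))

theorem hasDerivAt_right_of_differentiableAt_uncurry
    (hu : DifferentiableAt 𝕜 (uncurry u) (t, x)) :
    HasDerivAt (u t) (fderiv 𝕜 (uncurry u) (t, x) (0, 1)) x :=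
  hu.hasFDerivAt.comp_hasDerivAt x ((hasDerivAt_const x t).prodMk (hasDerivAt_id x))

theorem contDiff_uncurry_deriv_left {m n : WithTop ℕ∞} (hu : ContDiff 𝕜 n (uncurry u))
    (hmn : m + 1 ≤ n) : ContDiff 𝕜 m (uncurry fun t x => deriv (u · x) t) :=
  ContDiff.fderiv_apply (f := fun (z : 𝕜 × 𝕜) s => u s z.2)
    (hu.comp (contDiff_snd.prodMk contDiff_fst.snd)) contDiff_fst contDiff_const hmn

theorem contDiff_uncurry_deriv_right {m n : WithTop ℕ∞} (hu : ContDiff 𝕜 n (uncurry u))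
    (hmn : m + 1 ≤ n) : ContDiff 𝕜 m (uncurry fun t x => deriv (u t) x) :=
  ContDiff.fderiv_apply (f := fun (z : 𝕜 × 𝕜) y => u z.1 y)
    (hu.comp (contDiff_fst.fst.prodMk contDiff_snd)) contDiff_snd contDiff_const hmn

end

section

variable {𝕜 E F : Type*} [RCLike 𝕜] [NormedAddCommGroup E] [NormedSpace 𝕜 E]
  [NormedAddCommGroup F] [NormedSpace 𝕜 F]

theorem fderiv_fderiv_apply_comm {f : E → F} {z : E} (hf : ContDiffAt 𝕜 2 f z) (a b : E) :
    fderiv 𝕜 (fun w => fderiv 𝕜 f w a) z b = fderiv 𝕜 (fun w => fderiv 𝕜 f w b) z a := by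
  have hdiff : DifferentiableAt 𝕜 (fderiv 𝕜 f) z :=
    (hf.fderiv_right (m := 1) (by norm_num)).differentiableAt one_ne_zero
  have apply_eq (c d : E) :
      fderiv 𝕜 (fun w => fderiv 𝕜 f w c) z d = fderiv 𝕜 (fderiv 𝕜 f) z d c := by
    rw [fderiv_clm_apply hdiff (differentiableAt_const c)]
    simp
  rw [apply_eq, apply_eq]
  exact hf.isSymmSndFDerivAt (by simp) b a

theorem deriv_deriv_comm {u : 𝕜 → 𝕜 → F} (hu : ContDiff 𝕜 2 (uncurry u)) (t x : 𝕜) :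
    deriv (fun s => deriv (u s) x) t = deriv (fun y => deriv (u · y) t) x := by
  have hdiff : Differentiable 𝕜 (uncurry u) := hu.differentiable two_ne_zero
  have hpartial (c : 𝕜 × 𝕜) : Differentiable 𝕜 fun z => fderiv 𝕜 (uncurry u) z c :=
    ((hu.fderiv_right (m := 1) (by norm_num)).clm_apply contDiff_const).differentiable one_ne_zero
  calc deriv (fun s => deriv (u s) x) t
      = deriv (fun s => fderiv 𝕜 (uncurry u) (s, x) (0, 1)) t := by
        congr 1 with s
        exact (hasDerivAt_right_of_differentiableAt_uncurry (hdiff _)).deriv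
    _ = fderiv 𝕜 (fun z => fderiv 𝕜 (uncurry u) z (0, 1)) (t, x) (1, 0) :=
        (hasDerivAt_left_of_differentiableAt_uncurry
          (u := fun s y => fderiv 𝕜 (uncurry u) (s, y) (0, 1)) (hpartial _ _)).deriv
    _ = fderiv 𝕜 (fun z => fderiv 𝕜 (uncurry u) z (1, 0)) (t, x) (0, 1) :=
        fderiv_fderiv_apply_comm hu.contDiffAt _ _
    _ = deriv (fun y => fderiv 𝕜 (uncurry u) (t, y) (1, 0)) x :=
        (hasDerivAt_right_of_differentiableAt_uncurry
          (u := fun s y => fderiv 𝕜 (uncurry u) (s, y) (1, 0)) (hpartial _ _)).deriv.symm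
    _ = deriv (fun y => deriv (u · y) t) x := by
        congr 1 with y
        exact (hasDerivAt_left_of_differentiableAt_uncurry (hdiff _)).deriv.symm

end

end PartialDerivatives

section IteratedIntegrals

variable {F : Type*} [NormedAddCommGroup F] [NormedSpace ℝ F] {a b c d : ℝ}

theorem integral2_add {f g : ℝ → ℝ → F} (hf : Continuous (uncurry f))
    (hg : Continuous (uncurry g)) :
    ∫ t in a..b, ∫ x in c..d, (f t x + g t x) =
      (∫ t in a..b, ∫ x in c..d, f t x) + ∫ t in a..b, ∫ x in c..d, g t x := by
  have hinner (t : ℝ) : ∫ x in c..d, (f t x + g t x) =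
      (∫ x in c..d, f t x) + ∫ x in c..d, g t x :=
    intervalIntegral.integral_add ((hf.uncurry_left t).intervalIntegrable _ _)
      ((hg.uncurry_left t).intervalIntegrable _ _)
  simp only [hinner]
  exact intervalIntegral.integral_add
    ((continuous_parametric_intervalIntegral_of_continuous' hf c d).intervalIntegrable _ _)
    ((continuous_parametric_intervalIntegral_of_continuous' hg c d).intervalIntegrable _ _)

theorem integral2_deriv_add_deriv {f g : ℝ → ℝ → F} (hf : ContDiff ℝ 1 (uncurry f))
    (hg : ContDiff ℝ 1 (uncurry g)) :
    ∫ t in a..b, ∫ x in c..d, (deriv (f · x) t + deriv (g t) x) =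
      (((∫ t in a..b, g t d) - ∫ t in a..b, g t c) + ∫ x in c..d, f b x) -
        ∫ x in c..d, f a x := by
  have hfd : Differentiable ℝ (uncurry f) := hf.differentiable one_ne_zero
  have hgd : Differentiable ℝ (uncurry g) := hg.differentiable one_ne_zero
  have hdiv : Continuous fun z =>
      fderiv ℝ (uncurry f) z (1, 0) + fderiv ℝ (uncurry g) z (0, 1) :=
    ((hf.continuous_fderiv one_ne_zero).clm_apply continuous_const).add
      ((hg.continuous_fderiv one_ne_zero).clm_apply continuous_const)
  simp only [(hasDerivAt_left_of_differentiableAt_uncurry (hfd _)).deriv,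
    (hasDerivAt_right_of_differentiableAt_uncurry (hgd _)).deriv]
  exact integral2_divergence_prod_of_hasFDerivAt (uncurry f) (uncurry g) _ _ a c b d
    hf.continuous.continuousOn hg.continuous.continuousOn
    (fun z _ => (hfd z).hasFDerivAt) (fun z _ => (hgd z).hasFDerivAt)
    (hdiv.continuousOn.integrableOn_compact (isCompact_uIcc.prod isCompact_uIcc))

theorem integral2_deriv_smul_of_conservation_law {M E : ℝ → ℝ → F} {w : ℝ → ℝ}
    (hM : ContDiff ℝ 1 (uncurry M)) (hE : ContDiff ℝ 1 (uncurry E)) (hw : ContDiff ℝ 1 w)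
    (hcons : ∀ t ∈ [[a, b]], ∀ x ∈ [[c, d]], deriv (M · x) t = deriv (E t) x) :
    ∫ t in a..b, ∫ x in c..d, deriv w x • E t x =
      (w d • ∫ t in a..b, E t d) - (w c • ∫ t in a..b, E t c) -
        (∫ x in c..d, w x • M b x) + ∫ x in c..d, w x • M a x := by
  have hdiv : ∀ t ∈ [[a, b]], ∀ x ∈ [[c, d]],
      deriv w x • E t x = deriv (fun s => -(w x • M s x)) t + deriv (fun y => w y • E t y) x := by
    intro t ht x hx
    have hMt : DifferentiableAt ℝ (M · x) t := (hasDerivAt_left_of_differentiableAt_uncurry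
      (hM.differentiable one_ne_zero _)).differentiableAt
    have hEx : DifferentiableAt ℝ (E t) x := (hasDerivAt_right_of_differentiableAt_uncurry
      (hE.differentiable one_ne_zero _)).differentiableAt
    have hwx : DifferentiableAt ℝ w x := hw.differentiable one_ne_zero x
    have hwM : deriv (fun s => -(w x • M s x)) t = -(w x • deriv (M · x) t) :=
      (hMt.hasDerivAt.const_smul (w x)).neg.deriv
    have hwE : deriv (fun y => w y • E t y) x = w x • deriv (E t) x + deriv w x • E t x :=
      (hwx.hasDerivAt.smul hEx.hasDerivAt).deriv
    rw [hwM, hwE, hcons t ht x hx]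
    abel
  calc ∫ t in a..b, ∫ x in c..d, deriv w x • E t x
      = ∫ t in a..b, ∫ x in c..d,
          (deriv (fun s => -(w x • M s x)) t + deriv (fun y => w y • E t y) x) :=
        integral_congr fun t ht => integral_congr fun x hx => hdiv t ht x hx
    _ = (((∫ t in a..b, w d • E t d) - ∫ t in a..b, w c • E t c) +
          ∫ x in c..d, -(w x • M b x)) - ∫ x in c..d, -(w x • M a x) :=
        integral2_deriv_add_deriv ((hw.comp contDiff_snd).smul hM).neg
          ((hw.comp contDiff_snd).smul hE)
    _ = _ := by
        simp only [intervalIntegral.integral_smul, intervalIntegral.integral_neg]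
        abel

end IteratedIntegrals

section WaveEquation

variable {F : Type*} [NormedAddCommGroup F] [InnerProductSpace ℝ F] {v : ℝ → ℝ → F}
  {a b c d : ℝ}

/-- The energy density `(‖∂ₜv‖² + ‖∂ₓv‖²) / 2` of the one-dimensional wave equation, where the first
argument of `v` is the time `t` and the second the position `x`. -/
noncomputable def waveEnergyDensity (v : ℝ → ℝ → F) (t x : ℝ) : ℝ :=
  (‖deriv (v · x) t‖ ^ 2 + ‖deriv (v t) x‖ ^ 2) / 2

/-- The momentum density `⟪∂ₜv, ∂ₓv⟫` of the one-dimensional wave equation, with the sign for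
which its time derivative is the space derivative of the energy density. -/
noncomputable def waveMomentumDensity (v : ℝ → ℝ → F) (t x : ℝ) : ℝ :=
  ⟪deriv (v · x) t, deriv (v t) x⟫

theorem contDiff_waveEnergyDensity {m n : WithTop ℕ∞} (hv : ContDiff ℝ n (uncurry v))
    (hmn : m + 1 ≤ n) : ContDiff ℝ m (uncurry (waveEnergyDensity v)) :=
  (((contDiff_uncurry_deriv_left hv hmn).norm_sq ℝ).add
    ((contDiff_uncurry_deriv_right hv hmn).norm_sq ℝ)).div_const 2

theorem contDiff_waveMomentumDensity {m n : WithTop ℕ∞} (hv : ContDiff ℝ n (uncurry v))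
    (hmn : m + 1 ≤ n) : ContDiff ℝ m (uncurry (waveMomentumDensity v)) :=
  (contDiff_uncurry_deriv_left hv hmn).inner ℝ (contDiff_uncurry_deriv_right hv hmn)

theorem deriv_waveMomentumDensity_eq_deriv_waveEnergyDensity (hv : ContDiff ℝ 2 (uncurry v))
    {t x : ℝ} (hwave : deriv (deriv (v · x)) t = deriv (deriv (v t)) x) :
    deriv (waveMomentumDensity v · x) t = deriv (waveEnergyDensity v t) x := by
  have hvt := (contDiff_uncurry_deriv_left hv (m := 1) (by norm_num)).differentiable
    one_ne_zero (t, x)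
  have hvx := (contDiff_uncurry_deriv_right hv (m := 1) (by norm_num)).differentiable
    one_ne_zero (t, x)
  have hvtt := (hasDerivAt_left_of_differentiableAt_uncurry hvt).differentiableAt.hasDerivAt
  have hvtx := (hasDerivAt_right_of_differentiableAt_uncurry hvt).differentiableAt.hasDerivAt
  have hvxt := (hasDerivAt_left_of_differentiableAt_uncurry hvx).differentiableAt.hasDerivAt
  have hvxx := (hasDerivAt_right_of_differentiableAt_uncurry hvx).differentiableAt.hasDerivAt
  have hmomentum := (hvtt.inner ℝ hvxt).deriv
  have henergy := ((hvtx.norm_sq.add hvxx.norm_sq).div_const 2).deriv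
  calc deriv (waveMomentumDensity v · x) t
      = ⟪deriv (v · x) t, deriv (fun s => deriv (v s) x) t⟫ +
          ⟪deriv (deriv (v · x)) t, deriv (v t) x⟫ := hmomentum
    _ = (2 * ⟪deriv (v · x) t, deriv (fun y => deriv (v · y) t) x⟫ +
          2 * ⟪deriv (v t) x, deriv (deriv (v t)) x⟫) / 2 := by
        rw [hwave, deriv_deriv_comm hv, real_inner_comm (deriv (v t) x)]
        ring
    _ = deriv (waveEnergyDensity v t) x := henergy.symm

theorem integral2_deriv_mul_waveEnergyDensity {w : ℝ → ℝ} (hv : ContDiff ℝ 2 (uncurry v))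
    (hw : ContDiff ℝ 1 w)
    (hwave : ∀ t ∈ [[a, b]], ∀ x ∈ [[c, d]],
      deriv (deriv (v · x)) t = deriv (deriv (v t)) x) :
    ∫ t in a..b, ∫ x in c..d, deriv w x * waveEnergyDensity v t x =
      (w d * ∫ t in a..b, waveEnergyDensity v t d) -
        (w c * ∫ t in a..b, waveEnergyDensity v t c) -
        (∫ x in c..d, w x * waveMomentumDensity v b x) +
        ∫ x in c..d, w x * waveMomentumDensity v a x :=
  integral2_deriv_smul_of_conservation_law (contDiff_waveMomentumDensity hv (by norm_num))
    (contDiff_waveEnergyDensity hv (by norm_num)) hw fun t ht x hx =>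
      deriv_waveMomentumDensity_eq_deriv_waveEnergyDensity hv (hwave t ht x hx)

theorem integral_waveEnergyDensity_left (hv : ContDiff ℝ 1 (uncurry v)) (x : ℝ) :
    ∫ t in a..b, waveEnergyDensity v t x =
      (1 / 2) * ((∫ t in a..b, ‖deriv (v · x) t‖ ^ 2) + ∫ t in a..b, ‖deriv (v t) x‖ ^ 2) := by
  have hvt : Continuous fun t => ‖deriv (v · x) t‖ ^ 2 :=
    ((contDiff_uncurry_deriv_left hv (zero_add 1).le).continuous.uncurry_right x).norm.pow 2
  have hvx : Continuous fun t => ‖deriv (v t) x‖ ^ 2 :=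
    ((contDiff_uncurry_deriv_right hv (zero_add 1).le).continuous.uncurry_right x).norm.pow 2
  simp only [waveEnergyDensity, intervalIntegral.integral_div]
  rw [intervalIntegral.integral_add (hvt.intervalIntegrable _ _) (hvx.intervalIntegrable _ _)]
  ring

theorem integral2_waveEnergyDensity (hv : ContDiff ℝ 1 (uncurry v)) :
    ∫ t in a..b, ∫ x in c..d, waveEnergyDensity v t x =
      (1 / 2) * ((∫ t in a..b, ∫ x in c..d, ‖deriv (v · x) t‖ ^ 2) +
        ∫ t in a..b, ∫ x in c..d, ‖deriv (v t) x‖ ^ 2) := by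
  have hvt : Continuous (uncurry fun t x => ‖deriv (v · x) t‖ ^ 2) :=
    (contDiff_uncurry_deriv_left hv (zero_add 1).le).continuous.norm.pow 2
  have hvx : Continuous (uncurry fun t x => ‖deriv (v t) x‖ ^ 2) :=
    (contDiff_uncurry_deriv_right hv (zero_add 1).le).continuous.norm.pow 2
  simp only [waveEnergyDensity, intervalIntegral.integral_div]
  rw [integral2_add hvt hvx]
  ring

theorem multiplier_identity_general (hv : ContDiff ℝ 2 (uncurry v))
    (hwave : ∀ t ∈ [[a, b]], ∀ x ∈ [[c, d]],
      deriv (deriv (v · x)) t = deriv (deriv (v t)) x) :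
    (1 / 2) * ((∫ t in a..b, ∫ x in c..d, ‖deriv (v · x) t‖ ^ 2)
        - (d - c) * (∫ t in a..b, ‖deriv (v · c) t‖ ^ 2)
        + (∫ t in a..b, ∫ x in c..d, ‖deriv (v t) x‖ ^ 2))
      + (∫ x in c..d, (x - d) * ⟪deriv (v · x) b, deriv (v b) x⟫)
      - (∫ x in c..d, (x - d) * ⟪deriv (v · x) a, deriv (v a) x⟫)
      - (1 / 2) * ((d - c) * ∫ t in a..b, ‖deriv (v t) c‖ ^ 2) = 0 := by
  have hweighted := integral2_deriv_mul_waveEnergyDensity (w := (· - d)) hv (by fun_prop) hwave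
  simp only [deriv_sub_const_fun, deriv_id'', one_mul, sub_self, zero_mul,
    integral2_waveEnergyDensity (hv.of_le one_le_two),
    integral_waveEnergyDensity_left (hv.of_le one_le_two), waveMomentumDensity] at hweighted
  linear_combination hweighted

end WaveEquation

/-- multiplier identity: for a `C²` solution of the homogeneous wave
equation on `[0,T] × [0,1]` vanishing at `x = 1`,
`½(∬|∂ₜv|² − ∫₀ᵀ|∂ₜv(t,0)|² + ∬|∂ₓv|²) + ∫₀¹(x−1)∂ₓv(T,x)∂ₜv(T,x)dx
 − ∫₀¹(x−1)∂ₓv(0,x)∂ₜv(0,x)dx − ½∫₀ᵀ|∂ₓv(t,0)|²dt = 0`. -/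
theorem multiplier_identity
    (T : ℝ) (hT : 0 < T)
    (v : ℝ → ℝ → ℝ) (hv : ContDiff ℝ 2 (Function.uncurry v))
    (hwave : ∀ t ∈ Icc (0:ℝ) T, ∀ x ∈ Icc (0:ℝ) 1,
      deriv (deriv (fun s => v s x)) t = deriv (deriv (fun y => v t y)) x)
    (hbc1 : ∀ t ∈ Icc (0:ℝ) T, v t 1 = 0) :
    (1 / 2) * ((∫ t in (0:ℝ)..T, ∫ x in (0:ℝ)..1, (deriv (fun s => v s x) t) ^ 2)
        - (∫ t in (0:ℝ)..T, (deriv (fun s => v s 0) t) ^ 2)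
        + (∫ t in (0:ℝ)..T, ∫ x in (0:ℝ)..1, (deriv (fun y => v t y) x) ^ 2))
      + (∫ x in (0:ℝ)..1, (x - 1) * deriv (fun y => v T y) x * deriv (fun s => v s x) T)
      - (∫ x in (0:ℝ)..1, (x - 1) * deriv (fun y => v 0 y) x * deriv (fun s => v s x) 0)
      - (1 / 2) * (∫ t in (0:ℝ)..T, (deriv (fun y => v t y) 0) ^ 2) = 0 := by
  rw [← uIcc_of_le hT.le, ← uIcc_of_le zero_le_one] at hwave
  simpa [mul_assoc] using multiplier_identity_general hv hwave
end
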